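/- Let 𝐫 = ((r_1,s_1),…,(r_v,s_v)) and 𝐭 = ((t_1,u_1),…,(t_w,u_w)) be vectors of pairs of integers with all s_i, u_j ≠ 0, all t_j/u_j ∉ ℤ_{≤0} (so that (Q_{𝐫,𝐭}(q; n))_{n≥0} is well-defined) and all r_i/s_i ∉ ℤ_{≤0} (so that the sequence is not eventually zero). Then the following are equivalent: (i) there exists C(q) ∈ ℤ[q] ∖ {0} such that C(q)^n · Q_{𝐫,𝐭}(q; n) ∈ ℤ[q^{−1}, q] for every n ≥ 0; (ii) for every b ∈ {1, …, d_{𝐫,𝐭}} and all x ∈ ℝ, Ξ_{𝐫,𝐭}(b, x) ≥ 0. -/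

import Mathlib

open Polynomial
open scoped Classical

noncomputable section

/-- The generalized Dwork map `D_b(α)`: the unique rational whose reduced denominator is
coprime to `b` and such that `b·D_b(α) − α ∈ {0, 1, …, b−1}`. -/
def dwork (b : ℕ) (α : ℚ) : ℚ :=
  if h : ∃ θ : ℚ, Nat.Coprime θ.den b ∧ ∃ k : ℤ, 0 ≤ k ∧ k < (b : ℤ) ∧ (b : ℚ) * θ - α = (k : ℚ)
  then h.choose else 0

/-- `α ∈ ℤ_{≤0}`. -/
def IsNonPosInt (α : ℚ) : Prop := ∃ m : ℤ, m ≤ 0 ∧ α = (m : ℚ)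

/-- `α ∈ ℤ_{>0}`. -/
def IsPosInt (α : ℚ) : Prop := ∃ m : ℤ, 0 < m ∧ α = (m : ℚ)

/-- `𝔫_α`. -/
def frakn (α : ℚ) : ℤ := if 0 ≤ α then α.num else |α.num| + 1

/-- `⟨x⟩`: the fractional part of `x` if `x ∉ ℤ`, and `1` if `x ∈ ℤ`. -/
def cangle (x : ℝ) : ℝ := if ∃ m : ℤ, x = (m : ℝ) then 1 else Int.fract x

/-- Christol order `x ⪯ y`. -/
def cle (x y : ℝ) : Prop := cangle x < cangle y ∨ (cangle x = cangle y ∧ y ≤ x)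

/-- The step function `δ_b(r, s, ·)`. -/
def qdelta (b : ℕ) (r s : ℤ) (x : ℝ) : ℤ :=
  if Int.gcd (s / (Nat.gcd (Int.gcd r s) b : ℤ)) (((b / Nat.gcd (Int.gcd r s) b : ℕ)) : ℤ) = 1 then
    ⌊(Nat.gcd (Int.gcd r s) b : ℝ) * x
        - ((dwork (b / Nat.gcd (Int.gcd r s) b) ((r : ℚ) / (s : ℚ)) : ℚ) : ℝ)
        - ((⌊1 - (r : ℚ) / (s : ℚ)⌋ : ℤ) : ℝ) / ((b / Nat.gcd (Int.gcd r s) b : ℕ) : ℝ)⌋ + 1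
  else 0

/-- The Landau-type step function `Δ_b^{𝐫,𝐭}`. -/
def qDeltaFn {v w : ℕ} (b : ℕ) (rr : Fin v → ℤ × ℤ) (tt : Fin w → ℤ × ℤ) (x : ℝ) : ℤ :=
  (∑ i, qdelta b (rr i).1 (rr i).2 x) - (∑ j, qdelta b (tt j).1 (tt j).2 x)

/-- The q-Pochhammer symbol `(q^r; q^s)_n` for `n ∈ ℕ`, inside `ℚ(q)`. -/
def qPoch (r s : ℤ) (n : ℕ) : RatFunc ℚ :=
  ∏ i ∈ Finset.range n, (1 - RatFunc.X ^ (r + s * (i : ℤ)))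

/-- The q-Pochhammer symbol `(q^r; q^s)_n` for `n ∈ ℤ`. -/
def qPochZ (r s : ℤ) (n : ℤ) : RatFunc ℚ :=
  if 0 ≤ n then qPoch r s n.toNat else (qPoch (r - s) (-s) (-n).toNat)⁻¹

/-- Multiplicity of `p` in `g`: the largest `k` with `p^k ∣ g`. -/
def polyMult (p g : Polynomial ℚ) : ℕ := sSup {k : ℕ | p ^ k ∣ g}

/-- The valuation `v_{φ_b}` on `ℚ(q)` attached to the `b`-th cyclotomic polynomial. -/
def cycVal (b : ℕ) (f : RatFunc ℚ) : ℤ :=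
  (polyMult (cyclotomic b ℚ) f.num : ℤ) - (polyMult (cyclotomic b ℚ) f.denom : ℤ)

/-- The image of an integer polynomial in `ℚ(q)`. -/
def polyZ (g : Polynomial ℤ) : RatFunc ℚ :=
  algebraMap (Polynomial ℚ) (RatFunc ℚ) (g.map (Int.castRingHom ℚ))

/-- `f ∈ ℤ[q⁻¹, q]`. -/
def IsIntLaurent (f : RatFunc ℚ) : Prop :=
  ∃ (m : ℕ) (g : Polynomial ℤ), f * RatFunc.X ^ m = polyZ g

/-- `f ∈ ℤ[q]`. -/
def IsIntPoly (f : RatFunc ℚ) : Prop := ∃ g : Polynomial ℤ, f = polyZ g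

/-- The ratio attached to a pair of integers. -/
def ratOf (p : ℤ × ℤ) : ℚ := (p.1 : ℚ) / (p.2 : ℚ)

/-- The q-hypergeometric term `Q_{𝐫,𝐭}(q; n)`, `n ∈ ℕ`. -/
def qHyp {v w : ℕ} (rr : Fin v → ℤ × ℤ) (tt : Fin w → ℤ × ℤ) (n : ℕ) : RatFunc ℚ :=
  (∏ i, qPoch (rr i).1 (rr i).2 n) / (∏ j, qPoch (tt j).1 (tt j).2 n)

/-- The q-hypergeometric term `Q_{𝐫,𝐭}(q; n)`, `n ∈ ℤ`. -/
def qHypZ {v w : ℕ} (rr : Fin v → ℤ × ℤ) (tt : Fin w → ℤ × ℤ) (n : ℤ) : RatFunc ℚ :=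
  (∏ i, qPochZ (rr i).1 (rr i).2 n) / (∏ j, qPochZ (tt j).1 (tt j).2 n)

/-- `c := gcd(r, s, b)`. -/
def cOf (p : ℤ × ℤ) (b : ℕ) : ℕ := Nat.gcd (Int.gcd p.1 p.2) b

/-- Membership in `V_b` (resp. `W_b`): `gcd(s, b) = gcd(r, s, b)`. -/
def inV (p : ℤ × ℤ) (b : ℕ) : Prop := Nat.gcd p.2.natAbs b = cOf p b

/-- `d_{𝐫,𝐭}`: the lcm of all the `s_i` and `u_j`. -/
def dRT {v w : ℕ} (rr : Fin v → ℤ × ℤ) (tt : Fin w → ℤ × ℤ) : ℕ :=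
  Nat.lcm (Finset.univ.lcm fun i => ((rr i).2).natAbs)
    (Finset.univ.lcm fun j => ((tt j).2).natAbs)

/-- `b̃`: the greatest divisor of `b` coprime to `d`. -/
def btilde (d b : ℕ) : ℕ := Nat.findGreatest (fun k => k ∣ b ∧ Nat.Coprime k d) b

/-- The unique `a ∈ {1,…,d}` with `a·b̃ ≡ 1 (mod d)`. -/
def aOf (d b : ℕ) : ℕ :=
  if h : ∃ a, 1 ≤ a ∧ a ≤ d ∧ (a * btilde d b) % d = 1 % d then h.choose else 1

/-- The representative of `b` modulo `d` lying in `{1,…,d}`. -/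
def repMod (d b : ℕ) : ℕ := if b % d = 0 then d else b % d

/-- The jump abscissa `(⟨e·α⟩ + k)/c − ⌊1 − a·α⌋`. -/
def jumpPt (p : ℤ × ℤ) (b : ℕ) (a ei : ℤ) (k : ℕ) : ℝ :=
  (cangle (((ei : ℚ) * ratOf p : ℚ) : ℝ) + (k : ℝ)) / (cOf p b : ℝ)
    - ((⌊1 - (a : ℚ) * ratOf p⌋ : ℤ) : ℝ)

/-- Number of pairs `(i,k)` with jump abscissa `⪯ x` coming from one pair `p`. -/
def XiCount (p : ℤ × ℤ) (b : ℕ) (a ei : ℤ) (x : ℝ) : ℕ :=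
  if inV p b then ((Finset.range (cOf p b)).filter fun k => cle (jumpPt p b a ei k) x).card else 0

/-- The generalized Christol step function `Ξ_{𝐫,𝐭}(b, ·)`, relative to choices `e`, `f`. -/
def Xi {v w : ℕ} (rr : Fin v → ℤ × ℤ) (tt : Fin w → ℤ × ℤ) (b : ℕ)
    (e : Fin v → ℤ) (f : Fin w → ℤ) (x : ℝ) : ℤ :=
  (∑ i, (XiCount (rr i) b ((aOf (dRT rr tt) b : ℕ) : ℤ) (e i) x : ℤ))
    - (∑ j, (XiCount (tt j) b ((aOf (dRT rr tt) b : ℕ) : ℤ) (f j) x : ℤ))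

/-- `ei` is an admissible choice for the pair `p` and `b`: positive with `b·ei ≡ c (mod s)`. -/
def goodChoice (p : ℤ × ℤ) (b : ℕ) (ei : ℤ) : Prop :=
  inV p b → 0 < ei ∧ p.2 ∣ ((b : ℤ) * ei - (cOf p b : ℤ))

end

/-!
Up to sign and a power of `q`, every term `Q(q; n)` is a quotient of products of cyclotomic
polynomials `φ_b`, and the multiplicity of `φ_b` in `(q^r; q^s)_n` is the number of `k < n` with
`r + s k ≡ 0` modulo `b`. The factor `C(q)^n` can absorb finitely many `φ_b`, since multiplicities
grow at most linearly in `n`, but no more than that. Hence integrality means that for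
all large `b` the numerators have at least as many zeros modulo `b` below every `n` as the
denominators.

For `b` large in the residue class of `b₀` modulo `d`, the zeros `k ≥ 0` of `r + s k` are the
numbers `b (y + l) - α` with `l ≥ 0` and `y` one of the jumps `(⟨e α⟩ + m) / c` in `(0, 1]`. They
are ordered by `l`, then by `y`, and in case of a tie by decreasing `α`, which the shifts
`⌊1 - a α⌋` in the Christol order encode. So the number of zeros below a suitable cutoff is
`l` times the number of jumps plus the number of jump abscissas `⪯ x`. Only zeros of the
denominators have to be tested as cutoffs, and taking `l = 0` recovers `Ξ(b₀, x)` from the counts.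
-/

section CyclotomicProducts

/-- The product of the cyclotomic polynomials `φ_b` over a multiset of indices `b`. -/
noncomputable def cyclotomicProd (S : Multiset ℕ) : ℤ[X] :=
  (S.map fun b => cyclotomic b ℤ).prod

lemma cyclotomicProd_add (S T : Multiset ℕ) :
    cyclotomicProd (S + T) = cyclotomicProd S * cyclotomicProd T := by
  simp [cyclotomicProd]

lemma cyclotomicProd_nsmul (n : ℕ) (S : Multiset ℕ) :
    cyclotomicProd (n • S) = cyclotomicProd S ^ n := by
  simp [cyclotomicProd, Multiset.map_nsmul, Multiset.prod_nsmul]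

lemma cyclotomicProd_ne_zero (S : Multiset ℕ) : cyclotomicProd S ≠ 0 := by
  simp [cyclotomicProd, Multiset.prod_eq_zero_iff, cyclotomic_ne_zero]

lemma cyclotomicProd_dvd_of_le {S T : Multiset ℕ} (h : S ≤ T) :
    cyclotomicProd S ∣ cyclotomicProd T :=
  Multiset.prod_dvd_prod_of_le (Multiset.map_le_map h)

lemma prime_cyclotomic {b : ℕ} (hb : 0 < b) : Prime (cyclotomic b ℤ) :=
  (cyclotomic.irreducible hb).prime

lemma cyclotomic_dvd_cyclotomic_iff {b c : ℕ} (hb : 0 < b) :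
    cyclotomic b ℤ ∣ cyclotomic c ℤ ↔ b = c := by
  refine ⟨fun h => ?_, fun h => h ▸ dvd_rfl⟩
  obtain rfl | hc := c.eq_zero_or_pos
  · rw [cyclotomic_zero] at h
    exact absurd (isUnit_of_dvd_one h) (prime_cyclotomic hb).not_isUnit
  · exact cyclotomic_injective (R := ℤ) (eq_of_monic_of_associated (cyclotomic.monic b ℤ)
      (cyclotomic.monic c ℤ) (((cyclotomic.irreducible hb).dvd_irreducible_iff_associated
        (cyclotomic.irreducible hc)).1 h))

lemma emultiplicity_cyclotomicProd {b : ℕ} (hb : 0 < b) (S : Multiset ℕ) :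
    emultiplicity (cyclotomic b ℤ) (cyclotomicProd S) = S.count b := by
  have hprime := prime_cyclotomic hb
  induction S using Multiset.induction_on with
  | empty => simpa [cyclotomicProd] using emultiplicity_of_one_right hprime.not_isUnit
  | cons c S ih =>
    rw [← Multiset.singleton_add, cyclotomicProd_add, emultiplicity_mul hprime, ih,
      Multiset.count_add, Nat.cast_add]
    congr 1
    obtain rfl | hbc := eq_or_ne b c
    · simpa [cyclotomicProd] using
        (FiniteMultiplicity.of_prime_left hprime hprime.ne_zero).emultiplicity_self
    · simpa [cyclotomicProd, Multiset.count_singleton, hbc, emultiplicity_eq_zero] using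
        mt (cyclotomic_dvd_cyclotomic_iff hb).1 hbc

lemma count_le_count_of_cyclotomicProd_dvd {b : ℕ} (hb : 0 < b) {P : ℤ[X]} {S T : Multiset ℕ}
    (hP : ¬ cyclotomic b ℤ ∣ P) (h : cyclotomicProd T ∣ P * cyclotomicProd S) :
    T.count b ≤ S.count b := by
  have hle := emultiplicity_le_emultiplicity_of_dvd_right (a := cyclotomic b ℤ) h
  rw [emultiplicity_mul (prime_cyclotomic hb), emultiplicity_eq_zero.2 hP, zero_add,
    emultiplicity_cyclotomicProd hb, emultiplicity_cyclotomicProd hb] at hle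
  exact_mod_cast hle

lemma eventually_not_cyclotomic_dvd {P : ℤ[X]} (hP : P ≠ 0) :
    ∀ᶠ b in Filter.atTop, ¬ cyclotomic b ℤ ∣ P := by
  have hfin := (UniqueFactorizationMonoid.normalizedFactors P).toFinset.finite_toSet.preimage
    (cyclotomic_injective (R := ℤ)).injOn
  filter_upwards [Nat.cofinite_eq_atTop ▸ hfin.compl_mem_cofinite, Filter.eventually_gt_atTop 0]
    with b hb hb0 hdvd
  exact hb (Multiset.mem_toFinset.2 ((UniqueFactorizationMonoid.mem_normalizedFactors_iff' hP).2
    ⟨cyclotomic.irreducible hb0, (cyclotomic.monic b ℤ).normalize_eq_self, hdvd⟩))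

lemma exists_cyclotomicProd_dvd_pow_mul_iff {R T : ℕ → Multiset ℕ} {w : ℕ}
    (hT : ∀ b n, (T n).count b ≤ w * n) :
    (∃ P : ℤ[X], P ≠ 0 ∧ ∀ n, ∃ m : ℕ,
        cyclotomicProd (T n) ∣ P ^ n * cyclotomicProd (R n) * X ^ m) ↔
      ∀ᶠ b in Filter.atTop, ∀ n, (T n).count b ≤ (R n).count b := by
  constructor
  · rintro ⟨P, hP, h⟩
    filter_upwards [eventually_not_cyclotomic_dvd (mul_ne_zero hP X_ne_zero),
      Filter.eventually_gt_atTop 0] with b hb hb0 n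
    obtain ⟨m, hm⟩ := h n
    have hprime := prime_cyclotomic hb0
    have hPX : ¬ cyclotomic b ℤ ∣ P ^ n * X ^ m := fun hdvd =>
      hb ((hprime.dvd_or_dvd hdvd).elim (fun h => (hprime.dvd_of_dvd_pow h).mul_right _)
        fun h => (hprime.dvd_of_dvd_pow h).mul_left _)
    exact count_le_count_of_cyclotomicProd_dvd hb0 hPX (by rwa [mul_right_comm] at hm)
  · intro h
    obtain ⟨B, hB⟩ := Filter.eventually_atTop.1 h
    refine ⟨cyclotomicProd (w • Multiset.range B), cyclotomicProd_ne_zero _, fun n => ⟨0, ?_⟩⟩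
    rw [pow_zero, mul_one, ← cyclotomicProd_nsmul, ← cyclotomicProd_add]
    refine cyclotomicProd_dvd_of_le (Multiset.le_iff_count.2 fun b => ?_)
    rw [Multiset.count_add, Multiset.count_nsmul, Multiset.count_nsmul]
    obtain hb | hb := lt_or_ge b B
    · rw [Multiset.count_eq_one_of_mem (Multiset.nodup_range B) (Multiset.mem_range.2 hb), mul_one,
        mul_comm]
      exact (hT b n).trans (Nat.le_add_right _ _)
    · exact (hB b hb n).trans (Nat.le_add_left _ _)

end CyclotomicProducts

section LaurentIntegrality

/-- The map `polyZ` as a ring homomorphism `ℤ[q] → ℚ(q)`. -/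
noncomputable def polyZHom : ℤ[X] →+* RatFunc ℚ :=
  (algebraMap ℚ[X] (RatFunc ℚ)).comp (mapRingHom (Int.castRingHom ℚ))

lemma polyZ_eq_polyZHom (g : ℤ[X]) : polyZ g = polyZHom g := rfl

lemma polyZHom_injective : Function.Injective polyZHom :=
  (RatFunc.algebraMap_injective ℚ).comp
    (map_injective _ (RingHom.injective_int (Int.castRingHom ℚ)))

lemma polyZHom_X : polyZHom X = RatFunc.X := by
  simp [polyZHom]

lemma IsIntLaurent.monomial_mul {f : RatFunc ℚ} (hf : IsIntLaurent f) (c k : ℤ) :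
    IsIntLaurent ((c : RatFunc ℚ) * RatFunc.X ^ k * f) := by
  obtain ⟨m, g, hg⟩ := hf
  refine ⟨m + (-k).toNat, (c : ℤ[X]) * X ^ k.toNat * g, ?_⟩
  have hX : (RatFunc.X : RatFunc ℚ) ≠ 0 := RatFunc.X_ne_zero
  have hk : (RatFunc.X : RatFunc ℚ) ^ k * RatFunc.X ^ (-k).toNat = RatFunc.X ^ k.toNat := by
    rw [← zpow_natCast, ← zpow_natCast, ← zpow_add₀ hX]
    congr 1
    omega
  rw [polyZ_eq_polyZHom, map_mul, map_mul, map_intCast, map_pow, polyZHom_X, ← polyZ_eq_polyZHom,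
    ← hg, ← hk, pow_add]
  ring1

lemma intCast_units_mul_self {R : Type*} [Ring R] (ε : ℤˣ) :
    ((ε : ℤ) : R) * ((ε : ℤ) : R) = 1 := by
  rw [← Int.cast_mul, ← Units.val_mul, Int.units_mul_self, Units.val_one, Int.cast_one]

lemma isIntLaurent_monomial_mul_iff (ε : ℤˣ) (k : ℤ) {f : RatFunc ℚ} :
    IsIntLaurent (((ε : ℤ) : RatFunc ℚ) * RatFunc.X ^ k * f) ↔ IsIntLaurent f := by
  refine ⟨fun h => ?_, fun h => h.monomial_mul _ _⟩
  have hX : (RatFunc.X : RatFunc ℚ) ^ (-k) * RatFunc.X ^ k = 1 := by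
    rw [← zpow_add₀ RatFunc.X_ne_zero, neg_add_cancel, zpow_zero]
  convert h.monomial_mul ε (-k) using 1
  linear_combination (-f * (ε : ℤ) * (ε : ℤ)) * hX - f * intCast_units_mul_self (R := RatFunc ℚ) ε

lemma isIntLaurent_polyZ_div_polyZ_iff {F G : ℤ[X]} (hG : G ≠ 0) :
    IsIntLaurent (polyZ F / polyZ G) ↔ ∃ m : ℕ, G ∣ F * X ^ m := by
  refine exists_congr fun m => exists_congr fun g => ?_
  have hG' : polyZHom G ≠ 0 := (map_ne_zero_iff _ polyZHom_injective).2 hG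
  rw [polyZ_eq_polyZHom, polyZ_eq_polyZHom, polyZ_eq_polyZHom, ← polyZHom_X, ← map_pow,
    div_mul_eq_mul_div, div_eq_iff hG', ← map_mul, ← map_mul, polyZHom_injective.eq_iff, mul_comm g]

/-- `f` equals the cyclotomic product with index multiset `S`, up to sign and a power of `q`. -/
def HasCyclotomicFactors (f : RatFunc ℚ) (S : Multiset ℕ) : Prop :=
  ∃ (ε : ℤˣ) (k : ℤ), f = ((ε : ℤ) : RatFunc ℚ) * RatFunc.X ^ k * polyZ (cyclotomicProd S)

lemma hasCyclotomicFactors_one : HasCyclotomicFactors 1 0 :=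
  ⟨1, 0, by simp [cyclotomicProd, polyZ]⟩

lemma HasCyclotomicFactors.mul {f g : RatFunc ℚ} {S T : Multiset ℕ}
    (hf : HasCyclotomicFactors f S) (hg : HasCyclotomicFactors g T) :
    HasCyclotomicFactors (f * g) (S + T) := by
  obtain ⟨ε, k, rfl⟩ := hf
  obtain ⟨η, l, rfl⟩ := hg
  refine ⟨ε * η, k + l, ?_⟩
  rw [cyclotomicProd_add, polyZ_eq_polyZHom (_ * _), map_mul, ← polyZ_eq_polyZHom,
    ← polyZ_eq_polyZHom, zpow_add₀ RatFunc.X_ne_zero]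
  push_cast
  ring

lemma hasCyclotomicFactors_prod {ι : Type*} (s : Finset ι) {f : ι → RatFunc ℚ}
    {S : ι → Multiset ℕ} (h : ∀ i ∈ s, HasCyclotomicFactors (f i) (S i)) :
    HasCyclotomicFactors (∏ i ∈ s, f i) (∑ i ∈ s, S i) := by
  induction s using Finset.induction_on with
  | empty => exact hasCyclotomicFactors_one
  | insert i s hi ih =>
    rw [Finset.prod_insert hi, Finset.sum_insert hi]
    exact (h i (Finset.mem_insert_self i s)).mul
      (ih fun j hj => h j (Finset.mem_insert_of_mem hj))

lemma cyclotomicProd_divisors {m : ℕ} (hm : 0 < m) :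
    cyclotomicProd m.divisors.val = X ^ m - 1 :=
  prod_cyclotomic_eq_X_pow_sub_one hm ℤ

lemma hasCyclotomicFactors_one_sub_zpow {m : ℤ} (hm : m ≠ 0) :
    HasCyclotomicFactors (1 - RatFunc.X ^ m) m.natAbs.divisors.val := by
  have hpoly : polyZ (cyclotomicProd m.natAbs.divisors.val) = RatFunc.X ^ m.natAbs - 1 := by
    rw [cyclotomicProd_divisors (Int.natAbs_pos.2 hm), polyZ_eq_polyZHom, map_sub, map_pow,
      polyZHom_X, map_one]
  obtain h | h := Int.natAbs_eq m
  · refine ⟨-1, 0, ?_⟩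
    rw [hpoly, ← zpow_natCast, ← h]
    simp
  · refine ⟨1, m, ?_⟩
    rw [hpoly, ← zpow_natCast, mul_sub, mul_assoc, ← zpow_add₀ RatFunc.X_ne_zero,
      show m + (m.natAbs : ℤ) = 0 by omega]
    simp

lemma HasCyclotomicFactors.isIntLaurent_polyZ_mul_div_iff {f g : RatFunc ℚ} {S T : Multiset ℕ}
    (hf : HasCyclotomicFactors f S) (hg : HasCyclotomicFactors g T) (P : ℤ[X]) :
    IsIntLaurent (polyZ P * (f / g)) ↔
      ∃ m : ℕ, cyclotomicProd T ∣ P * cyclotomicProd S * X ^ m := by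
  obtain ⟨ε, k, rfl⟩ := hf
  obtain ⟨η, l, rfl⟩ := hg
  rw [← isIntLaurent_polyZ_div_polyZ_iff (cyclotomicProd_ne_zero T),
    ← isIntLaurent_monomial_mul_iff (ε / η) (k - l) (f := polyZ (P * _) / _)]
  congr! 1
  have hη : ((η : ℤ) : RatFunc ℚ)⁻¹ = (η : ℤ) :=
    inv_eq_of_mul_eq_one_left (intCast_units_mul_self η)
  rw [polyZ_eq_polyZHom (P * _), map_mul, ← polyZ_eq_polyZHom, ← polyZ_eq_polyZHom,
    zpow_sub₀ RatFunc.X_ne_zero, Int.units_div_eq_mul, Units.val_mul, Int.cast_mul]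
  simp only [div_eq_mul_inv, mul_inv, hη]
  ring1

end LaurentIntegrality

section PochhammerValuations

/-- The number of zeros `k < n` of `r + s k` modulo `b`, for `p = (r, s)`: this is the valuation
of `(q^r; q^s)_n` at the cyclotomic polynomial `φ_b`. -/
noncomputable def dvdCount (p : ℤ × ℤ) (b n : ℕ) : ℕ :=
  Nat.count (fun k : ℕ => (b : ℤ) ∣ p.1 + p.2 * k) n

lemma dvdCount_le (p : ℤ × ℤ) (b n : ℕ) : dvdCount p b n ≤ n :=
  Nat.count_le _

lemma add_mul_ne_zero_of_not_isNonPosInt {p : ℤ × ℤ} (hs : p.2 ≠ 0)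
    (hp : ¬ IsNonPosInt (ratOf p)) (k : ℕ) : p.1 + p.2 * (k : ℤ) ≠ 0 := by
  intro h
  have hs' : (p.2 : ℚ) ≠ 0 := by exact_mod_cast hs
  have h' : (p.1 : ℚ) + p.2 * k = 0 := by exact_mod_cast h
  refine hp ⟨-k, by simp, ?_⟩
  rw [ratOf, div_eq_iff hs']
  push_cast
  linear_combination h'

/-- The indices of the cyclotomic factors of `(q^r; q^s)_n`, for `p = (r, s)`. -/
noncomputable def qPochIndices (p : ℤ × ℤ) (n : ℕ) : Multiset ℕ :=
  ∑ k ∈ Finset.range n, (p.1 + p.2 * (k : ℤ)).natAbs.divisors.val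

lemma hasCyclotomicFactors_qPoch {p : ℤ × ℤ} (hp : ∀ k : ℕ, p.1 + p.2 * (k : ℤ) ≠ 0) (n : ℕ) :
    HasCyclotomicFactors (qPoch p.1 p.2 n) (qPochIndices p n) :=
  hasCyclotomicFactors_prod _ fun k _ => hasCyclotomicFactors_one_sub_zpow (hp k)

lemma count_qPochIndices {p : ℤ × ℤ} (hp : ∀ k : ℕ, p.1 + p.2 * (k : ℤ) ≠ 0) (b n : ℕ) :
    (qPochIndices p n).count b = dvdCount p b n := by
  rw [qPochIndices, dvdCount, Multiset.count_sum', Nat.count_eq_card_filter_range,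
    Finset.card_filter]
  refine Finset.sum_congr rfl fun k _ => ?_
  rw [Multiset.count_eq_of_nodup (Finset.nodup _)]
  simp only [Finset.mem_val, Nat.mem_divisors, Int.natCast_dvd, ne_eq, Int.natAbs_eq_zero, hp k,
    not_false_eq_true, and_true]

lemma exists_isIntLaurent_pow_mul_qHyp_iff {v w : ℕ} {rr : Fin v → ℤ × ℤ} {tt : Fin w → ℤ × ℤ}
    (hr : ∀ i, ∀ k : ℕ, (rr i).1 + (rr i).2 * (k : ℤ) ≠ 0)
    (ht : ∀ j, ∀ k : ℕ, (tt j).1 + (tt j).2 * (k : ℤ) ≠ 0) :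
    (∃ P : ℤ[X], P ≠ 0 ∧ ∀ n : ℕ, IsIntLaurent (polyZ P ^ n * qHyp rr tt n)) ↔
      ∀ᶠ b in Filter.atTop, ∀ n, ∑ j, dvdCount (tt j) b n ≤ ∑ i, dvdCount (rr i) b n := by
  have hcount {u : ℕ} {pp : Fin u → ℤ × ℤ} (hp : ∀ i, ∀ k : ℕ, (pp i).1 + (pp i).2 * (k : ℤ) ≠ 0)
      (b n : ℕ) : (∑ i, qPochIndices (pp i) n).count b = ∑ i, dvdCount (pp i) b n := by
    rw [Multiset.count_sum']
    exact Finset.sum_congr rfl fun i _ => count_qPochIndices (hp i) b n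
  have hfactors {u : ℕ} {pp : Fin u → ℤ × ℤ}
      (hp : ∀ i, ∀ k : ℕ, (pp i).1 + (pp i).2 * (k : ℤ) ≠ 0) (n : ℕ) :
      HasCyclotomicFactors (∏ i, qPoch (pp i).1 (pp i).2 n) (∑ i, qPochIndices (pp i) n) :=
    hasCyclotomicFactors_prod _ fun i _ => hasCyclotomicFactors_qPoch (hp i) n
  have hT (b n : ℕ) : (∑ j, qPochIndices (tt j) n).count b ≤ w * n := by
    rw [hcount ht]
    simpa using Finset.sum_le_card_nsmul Finset.univ (fun j => dvdCount (tt j) b n) n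
      fun j _ => dvdCount_le (tt j) b n
  simp only [← hcount hr, ← hcount ht, ← exists_cyclotomicProd_dvd_pow_mul_iff hT, qHyp,
    ← (hfactors hr _).isIntLaurent_polyZ_mul_div_iff (hfactors ht _), polyZ_eq_polyZHom, map_pow]

end PochhammerValuations

section ResidueClasses

open Filter

/-- The filter of large integers in the residue class of `b₀` modulo `d`. -/
def residueAtTop (d b₀ : ℕ) : Filter ℕ := atTop ⊓ 𝓟 {b | b ≡ b₀ [MOD d]}

lemma residueAtTop_le_atTop (d b₀ : ℕ) : residueAtTop d b₀ ≤ atTop := inf_le_left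

lemma eventually_modEq (d b₀ : ℕ) : ∀ᶠ b in residueAtTop d b₀, b ≡ b₀ [MOD d] :=
  mem_inf_of_right (mem_principal_self _)

lemma residueAtTop_neBot {d : ℕ} (hd : 0 < d) (b₀ : ℕ) : (residueAtTop d b₀).NeBot :=
  frequently_mem_iff_neBot.1 (Nat.frequently_modEq hd.ne' b₀)

lemma exists_pos_le_modEq {d : ℕ} (hd : 0 < d) (b : ℕ) :
    ∃ b₀, 1 ≤ b₀ ∧ b₀ ≤ d ∧ b ≡ b₀ [MOD d] := by
  obtain h | h := (b % d).eq_zero_or_pos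
  · exact ⟨d, hd, le_rfl, by rw [Nat.ModEq, h, Nat.mod_self]⟩
  · exact ⟨b % d, h, (Nat.mod_lt b hd).le, (Nat.mod_modEq b d).symm⟩

lemma eventually_atTop_iff_forall_residueAtTop {d : ℕ} (hd : 0 < d) {P : ℕ → Prop} :
    (∀ᶠ b in atTop, P b) ↔ ∀ b₀, 1 ≤ b₀ → b₀ ≤ d → ∀ᶠ b in residueAtTop d b₀, P b := by
  refine ⟨fun h b₀ _ _ => h.filter_mono (residueAtTop_le_atTop d b₀), fun h => ?_⟩
  have hall : ∀ᶠ b in atTop, ∀ b₀ ∈ Finset.Icc 1 d, b ≡ b₀ [MOD d] → P b :=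
    (eventually_all_finset _).2 fun b₀ hb₀ =>
      eventually_inf_principal.1 (h b₀ (Finset.mem_Icc.1 hb₀).1 (Finset.mem_Icc.1 hb₀).2)
  filter_upwards [hall] with b hb
  obtain ⟨b₀, h1, h2, hmod⟩ := exists_pos_le_modEq hd b
  exact hb b₀ (Finset.mem_Icc.2 ⟨h1, h2⟩) hmod

end ResidueClasses

section Cangle

lemma cangle_eq_sub_ceil_add_one (x : ℝ) : cangle x = x - ⌈x⌉ + 1 := by
  unfold cangle
  split_ifs with h
  · obtain ⟨m, rfl⟩ := h
    simp
  · rw [(Int.ceil_eq_floor_add_one_iff_notMem x).2 fun ⟨m, hm⟩ => h ⟨m, hm.symm⟩, Int.fract]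
    push_cast
    ring

lemma cangle_pos (x : ℝ) : 0 < cangle x := by
  linarith [cangle_eq_sub_ceil_add_one x, Int.ceil_lt_add_one x]

lemma cangle_le_one (x : ℝ) : cangle x ≤ 1 := by
  linarith [cangle_eq_sub_ceil_add_one x, Int.le_ceil x]

lemma ceil_add_intCast_of_pos_of_le_one {y : ℝ} (h0 : 0 < y) (h1 : y ≤ 1) (z : ℤ) :
    ⌈y + z⌉ = z + 1 := by
  rw [Int.ceil_add_intCast, (Int.ceil_eq_iff (z := 1)).2 (by simpa using And.intro h0 h1), add_comm]

lemma cangle_add_intCast {y : ℝ} (h0 : 0 < y) (h1 : y ≤ 1) (z : ℤ) : cangle (y + z) = y := by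
  rw [cangle_eq_sub_ceil_add_one, ceil_add_intCast_of_pos_of_le_one h0 h1]
  push_cast
  ring

end Cangle

section AdmissibleChoices

variable {p : ℤ × ℤ} {b b₀ d : ℕ} {e : ℤ}

lemma cOf_dvd_right (p : ℤ × ℤ) (b : ℕ) : cOf p b ∣ p.2.natAbs :=
  (Nat.gcd_dvd_left _ _).trans (Nat.gcd_dvd_right _ _)

lemma cOf_dvd_left (p : ℤ × ℤ) (b : ℕ) : cOf p b ∣ p.1.natAbs :=
  (Nat.gcd_dvd_left _ _).trans (Nat.gcd_dvd_left _ _)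

lemma cOf_dvd (p : ℤ × ℤ) (b : ℕ) : cOf p b ∣ b := Nat.gcd_dvd_right _ _

lemma cOf_pos (hs : p.2 ≠ 0) (b : ℕ) : 0 < cOf p b :=
  Nat.pos_of_dvd_of_pos (cOf_dvd_right p b) (Int.natAbs_pos.2 hs)

lemma gcd_eq_gcd_of_modEq {m : ℕ} (hm : m ∣ d) (h : b ≡ b₀ [MOD d]) :
    Nat.gcd m b = Nat.gcd m b₀ := by
  rw [Nat.gcd_comm m b, Nat.gcd_comm m b₀]
  exact (h.of_dvd hm).gcd_eq

lemma cOf_congr (hd : p.2.natAbs ∣ d) (h : b ≡ b₀ [MOD d]) : cOf p b = cOf p b₀ :=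
  gcd_eq_gcd_of_modEq ((Nat.gcd_dvd_right _ _).trans hd) h

lemma inV_congr (hd : p.2.natAbs ∣ d) (h : b ≡ b₀ [MOD d]) : inV p b ↔ inV p b₀ := by
  rw [inV, inV, cOf_congr hd h, gcd_eq_gcd_of_modEq hd h]

lemma goodChoice_congr (hd : p.2.natAbs ∣ d) (h : b ≡ b₀ [MOD d]) :
    goodChoice p b e ↔ goodChoice p b₀ e := by
  have hmod : (b : ℤ) * e ≡ b₀ * e [ZMOD p.2] :=
    ((Int.natCast_modEq_iff.2 h).of_dvd
      (Int.natAbs_dvd.1 (Int.natCast_dvd_natCast.2 hd))).mul_right e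
  rw [goodChoice, goodChoice, inV_congr hd h, cOf_congr hd h, ← Int.modEq_iff_dvd,
    ← Int.modEq_iff_dvd]
  exact imp_congr_right fun _ => and_congr_right fun _ =>
    ⟨fun h => h.trans hmod, fun h => h.trans hmod.symm⟩

lemma exists_goodChoice (hs : p.2 ≠ 0) (b : ℕ) : ∃ e, goodChoice p b e := by
  set g := Int.gcdB p.2 b
  refine ⟨g % p.2 + |p.2|, fun hV => ⟨?_, ?_⟩⟩
  · have := Int.emod_nonneg g hs
    have := abs_pos.2 hs
    omega
  · have hbezout : (cOf p b : ℤ) = p.2 * Int.gcdA p.2 b + b * g := by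
      rw [← Int.gcd_eq_gcd_ab, ← hV]
      rfl
    obtain ⟨u, hu⟩ : p.2 ∣ |p.2| := (dvd_abs _ _).2 dvd_rfl
    rw [hbezout, hu, Int.emod_def]
    exact ⟨b * (u - g / p.2) - Int.gcdA p.2 b, by ring⟩

lemma inV_of_dvd {k : ℤ} (h : (b : ℤ) ∣ p.1 + p.2 * k) : inV p b := by
  refine Nat.dvd_antisymm (Nat.dvd_gcd (Nat.dvd_gcd ?_ (Nat.gcd_dvd_left _ _))
    (Nat.gcd_dvd_right _ _)) (Nat.gcd_dvd_gcd_of_dvd_left _ (Nat.gcd_dvd_right _ _))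
  rw [← Int.natCast_dvd]
  have hs : ((Nat.gcd p.2.natAbs b : ℕ) : ℤ) ∣ p.2 := Int.natCast_dvd.2 (Nat.gcd_dvd_left _ _)
  have hb : ((Nat.gcd p.2.natAbs b : ℕ) : ℤ) ∣ p.1 + p.2 * k :=
    (Int.natCast_dvd_natCast.2 (Nat.gcd_dvd_right _ _)).trans h
  exact (dvd_add_left (hs.mul_right k)).1 hb

end AdmissibleChoices

section Jumps

variable {p : ℤ × ℤ} {b : ℕ}

/-- The jump abscissa `(⟨e·α⟩ + m)/c` without its integer shift; it lies in `(0, 1]` when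
`0 ≤ m < c`. -/
noncomputable def jumpAngle (p : ℤ × ℤ) (b : ℕ) (e m : ℤ) : ℝ :=
  (cangle (((e : ℚ) * ratOf p : ℚ) : ℝ) + m) / cOf p b

/-- The range of the index `k` in the definition of `Ξ`, empty outside of `V_b`. -/
noncomputable def jumpIndices (p : ℤ × ℤ) (b : ℕ) : Finset ℕ :=
  if inV p b then Finset.range (cOf p b) else ∅

lemma mem_jumpIndices {k : ℕ} : k ∈ jumpIndices p b ↔ inV p b ∧ k < cOf p b := by
  unfold jumpIndices
  split_ifs with h <;> simp [h]

lemma XiCount_eq_card_filter_jumpIndices (p : ℤ × ℤ) (b : ℕ) (a e : ℤ) (x : ℝ) :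
    XiCount p b a e x = ((jumpIndices p b).filter fun k => cle (jumpPt p b a e k) x).card := by
  unfold XiCount jumpIndices
  split_ifs <;> simp

lemma jumpAngle_pos_of_nonneg (hs : p.2 ≠ 0) (b : ℕ) (e : ℤ) {m : ℤ} (hm : 0 ≤ m) :
    0 < jumpAngle p b e m :=
  div_pos (add_pos_of_pos_of_nonneg (cangle_pos _) (by exact_mod_cast hm))
    (by exact_mod_cast cOf_pos hs b)

lemma jumpAngle_le_one_of_lt (e : ℤ) {k : ℕ} (hk : k < cOf p b) : jumpAngle p b e k ≤ 1 := by
  have hc : (0 : ℝ) < cOf p b := by exact_mod_cast k.zero_le.trans_lt hk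
  have hk' : (k : ℝ) + 1 ≤ cOf p b := by exact_mod_cast hk
  rw [jumpAngle, div_le_one hc, Int.cast_natCast]
  linarith [cangle_le_one (((e : ℚ) * ratOf p : ℚ) : ℝ)]

lemma jumpAngle_neg_one_nonpos (p : ℤ × ℤ) (b : ℕ) (e : ℤ) : jumpAngle p b e (-1) ≤ 0 := by
  refine div_nonpos_of_nonpos_of_nonneg ?_ (Nat.cast_nonneg _)
  rw [Int.cast_neg, Int.cast_one, ← sub_eq_add_neg]
  exact sub_nonpos.2 (cangle_le_one _)

lemma jumpAngle_strictMono (hs : p.2 ≠ 0) (b : ℕ) (e : ℤ) : StrictMono (jumpAngle p b e) := by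
  intro m m' h
  have hc : (0 : ℝ) < cOf p b := by exact_mod_cast cOf_pos hs b
  unfold jumpAngle
  gcongr

lemma jumpAngle_add_mul (hs : p.2 ≠ 0) (b : ℕ) (e m l : ℤ) :
    jumpAngle p b e (m + cOf p b * l) = jumpAngle p b e m + l := by
  have hc : (cOf p b : ℝ) ≠ 0 := by exact_mod_cast (cOf_pos hs b).ne'
  rw [jumpAngle, jumpAngle]
  push_cast
  field_simp
  ring

lemma jumpPt_eq (p : ℤ × ℤ) (b : ℕ) (a e : ℤ) (k : ℕ) :
    jumpPt p b a e k = jumpAngle p b e k + ((⌈(a : ℝ) * ratOf p⌉ - 1 : ℤ) : ℝ) := by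
  have hceil : ⌊1 - (a : ℚ) * ratOf p⌋ = 1 - ⌈(a : ℝ) * ratOf p⌉ := by
    rw [sub_eq_neg_add, Int.floor_add_one, Int.floor_neg, neg_add_eq_sub,
      ← Rat.ceil_cast (α := ℝ)]
    push_cast
    rfl
  rw [jumpPt, jumpAngle, hceil]
  push_cast
  ring

lemma cangle_jumpAngle_add_intCast (hs : p.2 ≠ 0) (e : ℤ) {k : ℕ} (hk : k < cOf p b) (z : ℤ) :
    cangle (jumpAngle p b e k + z) = jumpAngle p b e k :=
  cangle_add_intCast (jumpAngle_pos_of_nonneg hs b e (by positivity))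
    (jumpAngle_le_one_of_lt e hk) z

lemma cangle_jumpPt (hs : p.2 ≠ 0) (a e : ℤ) {k : ℕ} (hk : k < cOf p b) :
    cangle (jumpPt p b a e k) = jumpAngle p b e k := by
  rw [jumpPt_eq, cangle_jumpAngle_add_intCast hs e hk]

lemma ceil_jumpPt (hs : p.2 ≠ 0) (a e : ℤ) {k : ℕ} (hk : k < cOf p b) :
    ⌈jumpPt p b a e k⌉ = ⌈(a : ℝ) * ratOf p⌉ := by
  rw [jumpPt_eq, ceil_add_intCast_of_pos_of_le_one
    (jumpAngle_pos_of_nonneg hs b e (by positivity)) (jumpAngle_le_one_of_lt e hk), sub_add_cancel]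

lemma cle_jumpPt_iff (hs : p.2 ≠ 0) {a : ℤ} (ha : 0 < a) (e : ℤ) {k : ℕ} (hk : k < cOf p b)
    (x : ℝ) : cle (jumpPt p b a e k) x ↔ jumpAngle p b e k < cangle x ∨
      jumpAngle p b e k = cangle x ∧ ((⌈x⌉ - 1 : ℤ) : ℝ) / a < ratOf p := by
  have ha' : (0 : ℝ) < a := by exact_mod_cast ha
  rw [cle, cangle_jumpPt hs a e hk]
  refine or_congr_right (and_congr_right fun h => ?_)
  have hx : x = cangle x + ((⌈x⌉ - 1 : ℤ) : ℝ) := by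
    rw [cangle_eq_sub_ceil_add_one]
    push_cast
    ring
  rw [jumpPt_eq, h, div_lt_iff₀' ha', ← Int.lt_ceil, ← Int.le_sub_one_iff]
  conv_lhs => lhs; rw [hx]
  rw [add_le_add_iff_left, Int.cast_le]

lemma eventually_XiCount_neg_natCast (hs : p.2 ≠ 0) (b : ℕ) {a : ℤ} (ha : 0 < a) (e : ℤ) :
    ∀ᶠ M : ℕ in Filter.atTop, XiCount p b a e (-(M : ℝ)) = (jumpIndices p b).card := by
  have ha' : (0 : ℝ) < a := by exact_mod_cast ha
  filter_upwards [tendsto_natCast_atTop_atTop.eventually_gt_atTop (-((a : ℝ) * ratOf p))] with M hM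
  have hceil : ⌈-(M : ℝ)⌉ = -M := by simp [Int.ceil_neg]
  have hcangle : cangle (-(M : ℝ)) = 1 := by
    rw [cangle_eq_sub_ceil_add_one, hceil]
    simp
  rw [XiCount_eq_card_filter_jumpIndices, Finset.filter_true_of_mem]
  intro k hk
  have hk' := (mem_jumpIndices.1 hk).2
  rw [cle_jumpPt_iff hs ha e hk', hcangle, hceil, div_lt_iff₀' ha']
  refine (jumpAngle_le_one_of_lt e hk').lt_or_eq.imp_right fun h => ⟨h, ?_⟩
  push_cast
  linarith

end Jumps

section Zeros

open Filter

variable {p : ℤ × ℤ} {b b₀ d : ℕ} {e : ℤ}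

/-- With `p = (r, s) = c·(r', s')` and `b = c·b'`, the congruence `r' + s'n ≡ 0 [MOD b']` is solved
by means of `b'e = 1 + s't`. -/
lemma exists_zeros_eq_range (hs : p.2 ≠ 0) (hV : inV p b) (he : goodChoice p b e) :
    ∃ z : ℤ → ℤ, (∀ m, (z m : ℝ) = b * jumpAngle p b e m - ratOf p) ∧
      ∀ n, (b : ℤ) ∣ p.1 + p.2 * n ↔ n ∈ Set.range z := by
  obtain ⟨r, hr⟩ := Int.natCast_dvd.2 (cOf_dvd_left p b)
  obtain ⟨s, hs'⟩ := Int.natCast_dvd.2 (cOf_dvd_right p b)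
  obtain ⟨b', hb'⟩ := Int.natCast_dvd_natCast.2 (cOf_dvd p b)
  obtain ⟨t, ht⟩ := (he hV).2
  have hc : (cOf p b : ℤ) ≠ 0 := by exact_mod_cast (cOf_pos hs b).ne'
  have hst : s * t = b' * e - 1 :=
    mul_left_cancel₀ hc (by linear_combination -ht + e * hb' - t * hs')
  set y : ℤ := ⌈(((e : ℚ) * ratOf p : ℚ) : ℝ)⌉ - 1
  refine ⟨fun m => t * r + b' * (m - y), fun m => ?_, fun n => ?_⟩
  · have hcR : (cOf p b : ℝ) ≠ 0 := by exact_mod_cast hc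
    have hα : (ratOf p : ℝ) * s = r := by
      have hp2 : (p.2 : ℝ) ≠ 0 := by exact_mod_cast hs
      have hrR : (p.1 : ℝ) = cOf p b * r := by exact_mod_cast hr
      have hsR : (p.2 : ℝ) = cOf p b * s := by exact_mod_cast hs'
      have hsne : (s : ℝ) ≠ 0 := right_ne_zero_of_mul (hsR ▸ hp2)
      rw [ratOf, Rat.cast_div, Rat.cast_intCast, Rat.cast_intCast, hrR, hsR]
      field_simp
    have hbR : (b : ℝ) = cOf p b * b' := by exact_mod_cast hb'
    have hstR : (s : ℝ) * t = b' * e - 1 := by exact_mod_cast hst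
    rw [jumpAngle, cangle_eq_sub_ceil_add_one, hbR,
      show ⌈(((e : ℚ) * ratOf p : ℚ) : ℝ)⌉ = y + 1 from (sub_add_cancel _ 1).symm]
    push_cast
    field_simp
    linear_combination -t * hα + (ratOf p : ℝ) * hstR
  · rw [hr, hs', hb', mul_assoc, ← mul_add, mul_dvd_mul_iff_left hc]
    constructor
    · rintro ⟨x, hx⟩
      have hcop : IsCoprime b' s := ⟨e, -t, by linear_combination -hst⟩
      obtain ⟨j, hj⟩ : b' ∣ n - t * r :=
        hcop.dvd_of_dvd_mul_left ⟨x - e * r, by linear_combination hx - r * hst⟩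
      exact ⟨j + y, by linear_combination -hj⟩
    · rintro ⟨m, rfl⟩
      exact ⟨e * r + s * (m - y), by linear_combination r * hst⟩

lemma eventually_lt_natCast_mul {δ : ℝ} (hδ : 0 < δ) (K : ℝ) : ∀ᶠ b : ℕ in atTop, K < b * δ :=
  (tendsto_natCast_atTop_atTop.atTop_mul_const hδ).eventually_gt_atTop K

/-- If the jump of index `-1` is at `0` then `α` is an integer, hence positive. -/
lemma ratOf_pos_or_jumpAngle_neg_one_neg (hs : p.2 ≠ 0) (hp : ¬ IsNonPosInt (ratOf p))
    (hV : inV p b) (he : goodChoice p b e) :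
    0 < (ratOf p : ℝ) ∨ jumpAngle p b e (-1) < 0 := by
  by_contra! h
  obtain ⟨z, hz, -⟩ := exists_zeros_eq_range hs hV he
  have hzero : jumpAngle p b e (-1) = 0 := (jumpAngle_neg_one_nonpos p b e).antisymm h.2
  have hα : (ratOf p : ℝ) = ((-z (-1) : ℤ) : ℝ) := by
    push_cast
    rw [hz, hzero]
    ring
  exact hp ⟨-z (-1), by exact_mod_cast hα ▸ h.1, by exact_mod_cast hα⟩

lemma eventually_mul_jumpAngle_sub_nonneg_iff (hs : p.2 ≠ 0) (hp : ¬ IsNonPosInt (ratOf p))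
    (hV : inV p b₀) (he : goodChoice p b₀ e) :
    ∀ᶠ b : ℕ in atTop, ∀ m : ℤ, 0 ≤ b * jumpAngle p b₀ e m - ratOf p ↔ 0 ≤ m := by
  have hneg : ∀ᶠ b : ℕ in atTop, b * jumpAngle p b₀ e (-1) - ratOf p < 0 := by
    obtain h | h := ratOf_pos_or_jumpAngle_neg_one_neg hs hp hV he
    · exact Eventually.of_forall fun b => by
        linarith [mul_nonpos_of_nonneg_of_nonpos (b.cast_nonneg (α := ℝ))
          (jumpAngle_neg_one_nonpos p b₀ e)]
    · filter_upwards [eventually_lt_natCast_mul (neg_pos.2 h) (-(ratOf p : ℝ))] with b hb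
      linarith
  have hzero : ∀ᶠ b : ℕ in atTop, (ratOf p : ℝ) < b * jumpAngle p b₀ e 0 :=
    eventually_lt_natCast_mul (jumpAngle_pos_of_nonneg hs b₀ e le_rfl) _
  filter_upwards [hneg, hzero] with b hb1 hb0 m
  have hmono {m m' : ℤ} (h : m ≤ m') : b * jumpAngle p b₀ e m ≤ b * jumpAngle p b₀ e m' :=
    mul_le_mul_of_nonneg_left ((jumpAngle_strictMono hs b₀ e).monotone h) b.cast_nonneg
  obtain hm | hm := lt_or_ge m 0
  · refine iff_of_false (not_le.2 ?_) hm.not_ge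
    linarith [hmono (show m ≤ -1 by omega)]
  · refine iff_of_true ?_ hm
    linarith [hmono hm]

lemma eventually_exists_natZeros (hs : p.2 ≠ 0) (hp : ¬ IsNonPosInt (ratOf p))
    (hd : p.2.natAbs ∣ d) (he : goodChoice p b₀ e) :
    ∀ᶠ b : ℕ in residueAtTop d b₀, ∃ z : ℕ → ℕ → ℕ,
      (∀ k ∈ jumpIndices p b₀, ∀ l : ℕ, (z k l : ℝ) = b * (jumpAngle p b₀ e k + l) - ratOf p) ∧
      ∀ n : ℕ, (b : ℤ) ∣ p.1 + p.2 * n ↔ ∃ k ∈ jumpIndices p b₀, ∃ l, z k l = n := by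
  by_cases hV : inV p b₀
  swap
  · filter_upwards [eventually_modEq d b₀] with b hb
    refine ⟨fun _ _ => 0, fun k hk => absurd (mem_jumpIndices.1 hk).1 hV, fun n => ?_⟩
    exact iff_of_false (fun h => hV ((inV_congr hd hb).1 (inV_of_dvd h)))
      fun ⟨k, hk, _⟩ => hV (mem_jumpIndices.1 hk).1
  filter_upwards [eventually_modEq d b₀, (eventually_mul_jumpAngle_sub_nonneg_iff hs hp hV
    he).filter_mono (residueAtTop_le_atTop d b₀)] with b hb hnonneg
  obtain ⟨z, hz, hzeros⟩ :=
    exists_zeros_eq_range hs ((inV_congr hd hb).2 hV) ((goodChoice_congr hd hb).2 he)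
  have hangle (m : ℤ) : jumpAngle p b e m = jumpAngle p b₀ e m := by
    rw [jumpAngle, jumpAngle, cOf_congr hd hb]
  have hz_nonneg (m : ℤ) : 0 ≤ z m ↔ 0 ≤ m := by
    rw [← hnonneg m, ← hangle, ← hz, Int.cast_nonneg_iff]
  have hcast (k l : ℕ) : ((z (k + cOf p b₀ * l)).toNat : ℤ) = z (k + cOf p b₀ * l) :=
    Int.toNat_of_nonneg ((hz_nonneg _).2 (by positivity))
  refine ⟨fun k l => (z (k + cOf p b₀ * l)).toNat, fun k _ l => ?_, fun n => ?_⟩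
  · rw [← Int.cast_natCast, hcast, hz, hangle, jumpAngle_add_mul hs, Int.cast_natCast]
  · rw [hzeros]
    constructor
    · rintro ⟨m, hm⟩
      obtain ⟨m, rfl⟩ := Int.eq_ofNat_of_zero_le ((hz_nonneg m).1 (hm ▸ n.cast_nonneg))
      refine ⟨m % cOf p b₀, mem_jumpIndices.2 ⟨hV, Nat.mod_lt _ (cOf_pos hs b₀)⟩,
        m / cOf p b₀, ?_⟩
      beta_reduce
      rw [← Nat.cast_mul, ← Nat.cast_add, Nat.mod_add_div, hm, Int.toNat_natCast]
    · rintro ⟨k, -, l, rfl⟩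
      exact ⟨_, (hcast k l).symm⟩

lemma eventually_lt_iff_lex {u y : ℝ} (hu0 : 0 < u) (hu1 : u ≤ 1) (hy0 : 0 < y) (hy1 : y ≤ 1)
    (α κ : ℝ) : ∀ᶠ b : ℕ in atTop, ∀ l l' : ℕ,
      b * (u + l') - α < b * (y + l) - κ ↔ l' < l ∨ l' = l ∧ (u < y ∨ u = y ∧ κ < α) := by
  have hgap : ∀ᶠ b : ℕ in atTop, u = y ∨ |α - κ| < b * |u - y| := by
    by_cases h : u = y
    · exact Eventually.of_forall fun _ => Or.inl h
    · filter_upwards [eventually_lt_natCast_mul (abs_pos.2 (sub_ne_zero.2 h)) |α - κ|]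
        with b hb using Or.inr hb
  filter_upwards [hgap, eventually_lt_natCast_mul hu0 |α - κ|,
    eventually_lt_natCast_mul hy0 |α - κ|] with b hb hbu hby l l'
  obtain ⟨habs1, habs2⟩ := abs_le.1 (le_refl |α - κ|)
  have hb0 : (0 : ℝ) ≤ b := b.cast_nonneg
  have hbu1 := mul_le_mul_of_nonneg_left hu1 hb0
  have hby1 := mul_le_mul_of_nonneg_left hy1 hb0
  obtain hl | rfl | hl := lt_trichotomy l' l
  · have hle : (b : ℝ) * (l' + 1) ≤ b * l := by gcongr; exact_mod_cast hl
    exact iff_of_true (by linarith) (Or.inl hl)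
  · simp only [lt_self_iff_false, false_or, true_and]
    obtain rfl | hne := eq_or_ne u y
    · simp
    replace hb := hb.resolve_left hne
    obtain h | h := hne.lt_or_gt
    · rw [abs_of_neg (sub_neg.2 h)] at hb
      exact iff_of_true (by linarith) (Or.inl h)
    · rw [abs_of_pos (sub_pos.2 h)] at hb
      exact iff_of_false (by linarith) (by simp [h.not_gt, hne])
  · have hle : (b : ℝ) * (l + 1) ≤ b * l' := by gcongr; exact_mod_cast hl
    exact iff_of_false (by linarith) (by simp [hl.not_gt, hl.ne'])

end Zeros

section Counting

open Filter

variable {p : ℤ × ℤ} {b b₀ d : ℕ} {a e : ℤ}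

lemma natCount_eq_sum_of_parametrization {P : ℕ → Prop} [DecidablePred P] {J : Finset ℕ}
    {z : ℕ → ℕ → ℕ} {L : ℕ → ℕ} {N : ℕ} (hP : ∀ n, P n ↔ ∃ k ∈ J, ∃ l, z k l = n)
    (hinj : ∀ k ∈ J, ∀ k' ∈ J, ∀ l l', z k l = z k' l' → k = k' ∧ l = l')
    (hlt : ∀ k ∈ J, ∀ l, z k l < N ↔ l < L k) : Nat.count P N = ∑ k ∈ J, L k := by
  have hcard : (J.sigma fun k => Finset.range (L k)).card = ∑ k ∈ J, L k := by simp
  rw [← hcard, Nat.count_eq_card_filter_range]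
  symm
  refine Finset.card_bij (fun x _ => z x.1 x.2) ?_ ?_ ?_
  · rintro ⟨k, l⟩ hx
    obtain ⟨hk, hl⟩ := Finset.mem_sigma.1 hx
    exact Finset.mem_filter.2 ⟨Finset.mem_range.2 ((hlt k hk l).2 (Finset.mem_range.1 hl)),
      (hP _).2 ⟨k, hk, l, rfl⟩⟩
  · rintro ⟨k, l⟩ hx ⟨k', l'⟩ hx' h
    obtain ⟨rfl, rfl⟩ :=
      hinj k (Finset.mem_sigma.1 hx).1 k' (Finset.mem_sigma.1 hx').1 l l' h
    rfl
  · intro n hn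
    obtain ⟨hn, hPn⟩ := Finset.mem_filter.1 hn
    obtain ⟨k, hk, l, rfl⟩ := (hP n).1 hPn
    exact ⟨⟨k, l⟩, Finset.mem_sigma.2
      ⟨hk, Finset.mem_range.2 ((hlt k hk l).1 (Finset.mem_range.1 hn))⟩, rfl⟩

/-- The cutoff below which the zeros of `r + s n` modulo `b` are those of the first `l` periods,
together with those of the next period whose jump abscissa is `⪯ x`. Here `⌈x⌉ - 1` is the integer
`x - ⟨x⟩`. -/
noncomputable def jumpCutoff (a : ℤ) (x : ℝ) (b l : ℕ) : ℕ :=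
  ⌈b * (cangle x + l) - ((⌈x⌉ - 1 : ℤ) : ℝ) / a⌉₊

lemma jumpAngle_add_natCast_inj (hs : p.2 ≠ 0) {k k' l l' : ℕ} (hk : k < cOf p b)
    (hk' : k' < cOf p b) (h : jumpAngle p b e k + l = jumpAngle p b e k' + l') :
    k = k' ∧ l = l' := by
  have hangle : jumpAngle p b e k = jumpAngle p b e k' := by
    have hk_eq := cangle_jumpAngle_add_intCast hs e hk l
    have hk'_eq := cangle_jumpAngle_add_intCast hs e hk' l'
    rw [Int.cast_natCast] at hk_eq hk'_eq
    rw [← hk_eq, h, hk'_eq]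
  refine ⟨by exact_mod_cast (jumpAngle_strictMono hs b e).injective hangle, ?_⟩
  rw [hangle, add_right_inj] at h
  exact_mod_cast h

lemma eventually_dvdCount_jumpCutoff (hs : p.2 ≠ 0) (hp : ¬ IsNonPosInt (ratOf p))
    (hd : p.2.natAbs ∣ d) (he : goodChoice p b₀ e) (ha : 0 < a) (x : ℝ) :
    ∀ᶠ b in residueAtTop d b₀, ∀ l, dvdCount p b (jumpCutoff a x b l) =
      (jumpIndices p b₀).card * l + XiCount p b₀ a e x := by
  have hlex : ∀ᶠ b : ℕ in atTop, ∀ k ∈ jumpIndices p b₀, ∀ l l' : ℕ,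
      b * (jumpAngle p b₀ e k + l') - ratOf p < b * (cangle x + l) - ((⌈x⌉ - 1 : ℤ) : ℝ) / a ↔
        l' < l ∨ l' = l ∧ cle (jumpPt p b₀ a e k) x :=
    (eventually_all_finset _).2 fun k hk => by
      have hk' := (mem_jumpIndices.1 hk).2
      simpa only [cle_jumpPt_iff hs ha e hk'] using
        eventually_lt_iff_lex (jumpAngle_pos_of_nonneg hs b₀ e (by positivity))
          (jumpAngle_le_one_of_lt e hk') (cangle_pos x) (cangle_le_one x) _ _
  filter_upwards [eventually_exists_natZeros hs hp hd he,
    hlex.filter_mono (residueAtTop_le_atTop d b₀),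
    (eventually_gt_atTop 0).filter_mono (residueAtTop_le_atTop d b₀)] with b hzeros hlex hb l
  obtain ⟨z, hz, hdvd⟩ := hzeros
  have hinj : ∀ k ∈ jumpIndices p b₀, ∀ k' ∈ jumpIndices p b₀, ∀ l l',
      z k l = z k' l' → k = k' ∧ l = l' := by
    intro k hk k' hk' l l' h
    have hcast : (z k l : ℝ) = z k' l' := by exact_mod_cast h
    rw [hz k hk, hz k' hk', sub_left_inj, mul_right_inj' (by exact_mod_cast hb.ne')] at hcast
    exact jumpAngle_add_natCast_inj hs (mem_jumpIndices.1 hk).2 (mem_jumpIndices.1 hk').2 hcast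
  have hlt : ∀ k ∈ jumpIndices p b₀, ∀ l', z k l' < jumpCutoff a x b l ↔
      l' < l + if cle (jumpPt p b₀ a e k) x then 1 else 0 := by
    intro k hk l'
    rw [jumpCutoff, Nat.lt_ceil, hz k hk, hlex k hk]
    split_ifs with h
    · simp only [h, and_true]
      omega
    · simp only [h, and_false, or_false, add_zero]
  rw [dvdCount, natCount_eq_sum_of_parametrization hdvd hinj hlt, Finset.sum_add_distrib,
    Finset.sum_const, smul_eq_mul, XiCount_eq_card_filter_jumpIndices, Finset.card_filter]

lemma jumpCutoff_jumpPt (hs : p.2 ≠ 0) (ha : 0 < a) {k l n : ℕ} (hk : k < cOf p b₀)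
    (hn : (n : ℝ) = b * (jumpAngle p b₀ e k + l) - ratOf p) :
    jumpCutoff a (jumpPt p b₀ a e k) b l = n + 1 := by
  have ha' : (1 : ℝ) ≤ a := by exact_mod_cast ha
  have ha0 : (0 : ℝ) < a := by linarith
  rw [jumpCutoff, ceil_jumpPt hs a e hk, cangle_jumpPt hs a e hk, Nat.ceil_eq_iff n.succ_ne_zero]
  have hlt : ((⌈(a : ℝ) * ratOf p⌉ - 1 : ℤ) : ℝ) / a < ratOf p := by
    rw [div_lt_iff₀' ha0, ← Int.lt_ceil]
    exact sub_one_lt _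
  have hle : ratOf p - 1 ≤ ((⌈(a : ℝ) * ratOf p⌉ - 1 : ℤ) : ℝ) / a := by
    rw [le_div_iff₀' ha0]
    push_cast
    linarith [Int.le_ceil ((a : ℝ) * ratOf p)]
  push_cast at hlt hle ⊢
  constructor <;> linarith

variable {ι κ : Type*} [Fintype ι] [Fintype κ] {rr : ι → ℤ × ℤ} {tt : κ → ℤ × ℤ}

lemma sum_dvdCount_le_of_forall_dvd
    (h : ∀ j, ∀ n : ℕ, (b : ℤ) ∣ (tt j).1 + (tt j).2 * n →
      ∑ j, dvdCount (tt j) b (n + 1) ≤ ∑ i, dvdCount (rr i) b (n + 1)) (n : ℕ) :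
    ∑ j, dvdCount (tt j) b n ≤ ∑ i, dvdCount (rr i) b n := by
  induction n with
  | zero => simp [dvdCount]
  | succ n ih =>
    by_cases hdvd : ∃ j, (b : ℤ) ∣ (tt j).1 + (tt j).2 * n
    · obtain ⟨j, hj⟩ := hdvd
      exact h j n hj
    · calc ∑ j, dvdCount (tt j) b (n + 1) = ∑ j, dvdCount (tt j) b n :=
            Finset.sum_congr rfl fun j _ => by
              rw [dvdCount, Nat.count_succ, if_neg (not_exists.1 hdvd j), add_zero, dvdCount]
        _ ≤ ∑ i, dvdCount (rr i) b n := ih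
        _ ≤ ∑ i, dvdCount (rr i) b (n + 1) :=
            Finset.sum_le_sum fun i _ => Nat.count_monotone _ n.le_succ

lemma sum_card_jumpIndices_le (hs : ∀ i, (rr i).2 ≠ 0) (hu : ∀ j, (tt j).2 ≠ 0) (ha : 0 < a)
    {e : ι → ℤ} {f : κ → ℤ}
    (h : ∀ x, ∑ j, XiCount (tt j) b a (f j) x ≤ ∑ i, XiCount (rr i) b a (e i) x) :
    ∑ j, (jumpIndices (tt j) b).card ≤ ∑ i, (jumpIndices (rr i) b).card := by
  obtain ⟨M, hR, hT⟩ :=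
    ((eventually_all.2 fun i => eventually_XiCount_neg_natCast (hs i) b ha (e i)).and
      (eventually_all.2 fun j => eventually_XiCount_neg_natCast (hu j) b ha (f j))).exists
  simpa only [hR, hT] using h (-(M : ℝ))

lemma eventually_sum_dvdCount_jumpCutoff (hs : ∀ i, (rr i).2 ≠ 0)
    (hr : ∀ i, ¬ IsNonPosInt (ratOf (rr i))) (hd : ∀ i, (rr i).2.natAbs ∣ d) {e : ι → ℤ}
    (he : ∀ i, goodChoice (rr i) b₀ (e i)) (ha : 0 < a) (x : ℝ) :
    ∀ᶠ b in residueAtTop d b₀, ∀ l, ∑ i, dvdCount (rr i) b (jumpCutoff a x b l) =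
      (∑ i, (jumpIndices (rr i) b₀).card) * l + ∑ i, XiCount (rr i) b₀ a (e i) x := by
  filter_upwards [eventually_all.2 fun i =>
    eventually_dvdCount_jumpCutoff (hs i) (hr i) (hd i) (he i) ha x] with b hb l
  simp only [hb, Finset.sum_add_distrib, Finset.sum_mul]

lemma eventually_sum_dvdCount_le_of_forall_sum_XiCount_le (hs : ∀ i, (rr i).2 ≠ 0)
    (hu : ∀ j, (tt j).2 ≠ 0)
    (hr : ∀ i, ¬ IsNonPosInt (ratOf (rr i))) (ht : ∀ j, ¬ IsNonPosInt (ratOf (tt j)))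
    (hds : ∀ i, (rr i).2.natAbs ∣ d) (hdu : ∀ j, (tt j).2.natAbs ∣ d) {e : ι → ℤ} {f : κ → ℤ}
    (he : ∀ i, goodChoice (rr i) b₀ (e i)) (hf : ∀ j, goodChoice (tt j) b₀ (f j)) (ha : 0 < a)
    (h : ∀ x, ∑ j, XiCount (tt j) b₀ a (f j) x ≤ ∑ i, XiCount (rr i) b₀ a (e i) x) :
    ∀ᶠ b in residueAtTop d b₀, ∀ n, ∑ j, dvdCount (tt j) b n ≤ ∑ i, dvdCount (rr i) b n := by
  have hcutoff (x : ℝ) : ∀ᶠ b in residueAtTop d b₀, ∀ l,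
      ∑ j, dvdCount (tt j) b (jumpCutoff a x b l) ≤
        ∑ i, dvdCount (rr i) b (jumpCutoff a x b l) := by
    filter_upwards [eventually_sum_dvdCount_jumpCutoff hs hr hds he ha x,
      eventually_sum_dvdCount_jumpCutoff hu ht hdu hf ha x] with b hR hT l
    rw [hR, hT]
    exact add_le_add (Nat.mul_le_mul_right l (sum_card_jumpIndices_le hs hu ha h)) (h x)
  filter_upwards [eventually_all.2 fun j => (eventually_all_finset (jumpIndices (tt j) b₀)).2
      fun k _ => hcutoff (jumpPt (tt j) b₀ a (f j) k),
    eventually_all.2 fun j => eventually_exists_natZeros (hu j) (ht j) (hdu j) (hf j)]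
    with b hjumps hzeros
  refine sum_dvdCount_le_of_forall_dvd fun j n hn => ?_
  obtain ⟨z, hz, hdvd⟩ := hzeros j
  obtain ⟨k, hk, l, rfl⟩ := (hdvd n).1 hn
  simpa only [jumpCutoff_jumpPt (hu j) ha (mem_jumpIndices.1 hk).2 (hz k hk l)]
    using hjumps j k hk l

lemma forall_sum_XiCount_le_of_eventually (hd : 0 < d) (hs : ∀ i, (rr i).2 ≠ 0)
    (hu : ∀ j, (tt j).2 ≠ 0)
    (hr : ∀ i, ¬ IsNonPosInt (ratOf (rr i))) (ht : ∀ j, ¬ IsNonPosInt (ratOf (tt j)))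
    (hds : ∀ i, (rr i).2.natAbs ∣ d) (hdu : ∀ j, (tt j).2.natAbs ∣ d) {e : ι → ℤ} {f : κ → ℤ}
    (he : ∀ i, goodChoice (rr i) b₀ (e i)) (hf : ∀ j, goodChoice (tt j) b₀ (f j)) (ha : 0 < a)
    (h : ∀ᶠ b in residueAtTop d b₀, ∀ n, ∑ j, dvdCount (tt j) b n ≤ ∑ i, dvdCount (rr i) b n)
    (x : ℝ) : ∑ j, XiCount (tt j) b₀ a (f j) x ≤ ∑ i, XiCount (rr i) b₀ a (e i) x := by
  have := residueAtTop_neBot hd b₀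
  obtain ⟨b, hle, hR, hT⟩ := (h.and ((eventually_sum_dvdCount_jumpCutoff hs hr hds he ha x).and
    (eventually_sum_dvdCount_jumpCutoff hu ht hdu hf ha x))).exists
  simpa only [hR, hT, mul_zero, zero_add] using hle (jumpCutoff a x b 0)

end Counting

section Criterion

open Filter

lemma aOf_pos (d b : ℕ) : 0 < aOf d b := by
  unfold aOf
  split_ifs with h
  · exact h.choose_spec.1
  · exact one_pos

variable {v w : ℕ} {rr : Fin v → ℤ × ℤ} {tt : Fin w → ℤ × ℤ}

lemma dRT_pos (hs : ∀ i, (rr i).2 ≠ 0) (hu : ∀ j, (tt j).2 ≠ 0) : 0 < dRT rr tt :=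
  Nat.lcm_pos (Nat.pos_of_ne_zero (by simpa [Finset.lcm_eq_zero_iff] using hs))
    (Nat.pos_of_ne_zero (by simpa [Finset.lcm_eq_zero_iff] using hu))

lemma natAbs_dvd_dRT_left (rr : Fin v → ℤ × ℤ) (tt : Fin w → ℤ × ℤ) (i : Fin v) :
    (rr i).2.natAbs ∣ dRT rr tt :=
  (Finset.dvd_lcm (f := fun i => (rr i).2.natAbs) (Finset.mem_univ i)).trans
    (Nat.dvd_lcm_left _ _)

lemma natAbs_dvd_dRT_right (rr : Fin v → ℤ × ℤ) (tt : Fin w → ℤ × ℤ) (j : Fin w) :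
    (tt j).2.natAbs ∣ dRT rr tt :=
  (Finset.dvd_lcm (f := fun j => (tt j).2.natAbs) (Finset.mem_univ j)).trans
    (Nat.dvd_lcm_right _ _)

/-- The integers `d_{𝐫,𝐭}` and `a` of the definition of `Ξ_{𝐫,𝐭}` may be replaced by any common
multiple of the `s_i` and `u_j`, and by any positive integers. -/
theorem laurent_integrality_xi_criterion_general {d : ℕ} (hd : 0 < d) {a : ℕ → ℤ}
    (ha : ∀ b, 0 < a b) (hds : ∀ i, (rr i).2.natAbs ∣ d) (hdu : ∀ j, (tt j).2.natAbs ∣ d)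
    (ht : ∀ j, ¬ IsNonPosInt (ratOf (tt j))) (hr : ∀ i, ¬ IsNonPosInt (ratOf (rr i))) :
    (∃ C : ℤ[X], C ≠ 0 ∧ ∀ n : ℕ, IsIntLaurent (polyZ C ^ n * qHyp rr tt n)) ↔
      ∀ b, 1 ≤ b → b ≤ d → ∀ (e : Fin v → ℤ) (f : Fin w → ℤ),
        (∀ i, goodChoice (rr i) b (e i)) → (∀ j, goodChoice (tt j) b (f j)) →
          ∀ x, ∑ j, XiCount (tt j) b (a b) (f j) x ≤ ∑ i, XiCount (rr i) b (a b) (e i) x := by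
  have hs (i) : (rr i).2 ≠ 0 := Int.natAbs_ne_zero.1 (ne_zero_of_dvd_ne_zero hd.ne' (hds i))
  have hu (j) : (tt j).2 ≠ 0 := Int.natAbs_ne_zero.1 (ne_zero_of_dvd_ne_zero hd.ne' (hdu j))
  rw [exists_isIntLaurent_pow_mul_qHyp_iff
      (fun i => add_mul_ne_zero_of_not_isNonPosInt (hs i) (hr i))
      (fun j => add_mul_ne_zero_of_not_isNonPosInt (hu j) (ht j)),
    eventually_atTop_iff_forall_residueAtTop hd]
  refine forall₃_congr fun b _ _ => ⟨fun h e f he hf => ?_, fun h => ?_⟩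
  · exact forall_sum_XiCount_le_of_eventually hd hs hu hr ht hds hdu he hf (ha b) h
  · choose e he using fun i => exists_goodChoice (hs i) b
    choose f hf using fun j => exists_goodChoice (hu j) b
    exact eventually_sum_dvdCount_le_of_forall_sum_XiCount_le hs hu hr ht hds hdu he hf (ha b)
      (h e f he hf)

end Criterion

/-- Theorem 5.6: efficient criterion for Laurent q-integrality. -/
theorem laurent_integrality_xi_criterion {v w : ℕ} (rr : Fin v → ℤ × ℤ) (tt : Fin w → ℤ × ℤ)
    (hs : ∀ i, (rr i).2 ≠ 0) (hu : ∀ j, (tt j).2 ≠ 0)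
    (ht : ∀ j, ¬ IsNonPosInt (ratOf (tt j))) (hr : ∀ i, ¬ IsNonPosInt (ratOf (rr i))) :
    (∃ C : Polynomial ℤ, C ≠ 0 ∧ ∀ n : ℕ, IsIntLaurent (polyZ C ^ n * qHyp rr tt n)) ↔
      (∀ b : ℕ, 1 ≤ b → b ≤ dRT rr tt →
        ∀ (e : Fin v → ℤ) (f : Fin w → ℤ),
          (∀ i, goodChoice (rr i) b (e i)) → (∀ j, goodChoice (tt j) b (f j)) →
            ∀ x : ℝ, 0 ≤ Xi rr tt b e f x) := by
  simpa only [Xi, sub_nonneg, ← Nat.cast_sum, Nat.cast_le] using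
    laurent_integrality_xi_criterion_general (dRT_pos hs hu)
      (fun b => Int.natCast_pos.2 (aOf_pos (dRT rr tt) b)) (natAbs_dvd_dRT_left rr tt)
      (natAbs_dvd_dRT_right rr tt) ht hr
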